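/- arXiv:1210.4673 — 13 statements merged into one kernel-verified Lean document; each statement's English description precedes it below -/
import Mathlib

section
/- Let $I$ be a nonempty finite index set, let $w_i > 0$ for $i \in I$, let $S = \sum_{i \in I} w_i$, and let $D > 0$ and $f_{rel} > 0$. Then: (a) for every family of speeds $(f_i)_{i \in I}$ with $f_i \geq f_{rel}$ for all $i$ and $\sum_{i \in I} w_i / f_i \leq D$, one has $\sum_{i \in I} w_i f_i^2 \geq S \cdot (\max(f_{rel}, S/D))^2$; and (b) the constant family $f_i = \max(f_{rel}, S/D)$ satisfies both constraints and attains this bound. In other words, the minimum energy for executing a chain of tasks once each, within deadline $D$ and with every speed at least $f_{rel}$, equals $S \cdot (\max(f_{rel}, S/D))^2$, achieved by running every task at speed $\max(f_{rel}, S/D)$. -/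
open Finset

/-- Minimum energy for a chain of tasks executed once each within deadline `D`,
with every speed at least `frel`, equals `S * (max frel (S/D))^2`, achieved by
running every task at speed `max frel (S/D)`. -/
theorem chain_single_execution_optimal
    {I : Type*} [Fintype I] [Nonempty I] (w : I → ℝ) (hw : ∀ i, 0 < w i)
    (S D frel : ℝ) (hS : S = ∑ i, w i) (hD : 0 < D) (hfrel : 0 < frel) :
    (∀ f : I → ℝ, (∀ i, frel ≤ f i) → (∑ i, w i / f i) ≤ D →
        S * (max frel (S / D)) ^ 2 ≤ ∑ i, w i * (f i) ^ 2) ∧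
    ((∀ i : I, frel ≤ max frel (S / D)) ∧
      (∑ i, w i / max frel (S / D)) ≤ D ∧
      (∑ i, w i * (max frel (S / D)) ^ 2) = S * (max frel (S / D)) ^ 2) := by
  have hSpos : 0 < S := by
    rw [hS]; exact Finset.sum_pos (fun i _ => hw i) Finset.univ_nonempty
  refine ⟨?_, fun _ => le_max_left _ _, ?_, ?_⟩
  · intro f hf hd
    rcases le_total (S / D) frel with h | h
    · rw [max_eq_left h, hS, Finset.sum_mul]
      refine Finset.sum_le_sum fun i _ => ?_
      exact mul_le_mul_of_nonneg_left (pow_le_pow_left₀ hfrel.le (hf i) 2) (hw i).le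
    · rw [max_eq_right h]
      obtain ⟨m, hm⟩ : ∃ m, m = S / D := ⟨_, rfl⟩
      rw [← hm]
      have hmpos : 0 < m := by rw [hm]; positivity
      have hmD : m * D = S := by rw [hm]; field_simp
      have key : ∀ i, 3 * m ^ 2 * w i - 2 * m ^ 3 * (w i / f i) ≤ w i * (f i) ^ 2 := by
        intro i
        have hfi : 0 < f i := lt_of_lt_of_le hfrel (hf i)
        have hwi := hw i
        have e : w i * (f i) ^ 2 - (3 * m ^ 2 * w i - 2 * m ^ 3 * (w i / f i))
            = w i * ((f i - m) ^ 2 * (f i + 2 * m)) / f i := by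
          field_simp
          ring
        have : 0 ≤ w i * ((f i - m) ^ 2 * (f i + 2 * m)) / f i := by positivity
        linarith
      have hsum := Finset.sum_le_sum (s := Finset.univ) fun i _ => key i
      rw [Finset.sum_sub_distrib, ← Finset.mul_sum, ← Finset.mul_sum, ← hS] at hsum
      have h2 : 2 * m ^ 3 * (∑ i, w i / f i) ≤ 2 * m ^ 3 * D :=
        mul_le_mul_of_nonneg_left hd (by positivity)
      have h3 : 2 * m ^ 3 * D = 2 * m ^ 2 * S := by rw [← hmD]; ring
      linarith
  · rw [← Finset.sum_div, ← hS, div_le_iff₀ (lt_of_lt_of_le hfrel (le_max_left _ _))]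
    have h := mul_le_mul_of_nonneg_left (le_max_right frel (S / D)) hD.le
    rwa [mul_div_cancel₀ _ hD.ne'] at h
  · rw [← Finset.sum_mul, ← hS]
end

section
/- Let $I$ be a finite index set of tasks with weights $w_i > 0$, let $S = \sum_{i \in I} w_i$, let $p \geq 1$ be a number of processors, let $D > 0$ be a deadline, let $a : I \to \{1, \dots, p\}$ be any assignment of tasks to processors, and let $f_i > 0$ be speeds such that for every processor $q$, $\sum_{i : a(i) = q} w_i / f_i \leq D$. Then the total energy satisfies $\sum_{i \in I} w_i f_i^2 \geq S^3 / (pD)^2$. -/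
open Finset

/-- Lower bound on the energy for independent tasks on `p` processors with
deadline `D`: the total energy is at least `S^3 / (p*D)^2`. -/
theorem indep_energy_lower_bound
    {I : Type*} [Fintype I] (w : I → ℝ) (hw : ∀ i, 0 < w i)
    (S : ℝ) (hS : S = ∑ i, w i)
    (p : ℕ) (hp : 1 ≤ p) (D : ℝ) (hD : 0 < D)
    (a : I → Fin p) (f : I → ℝ) (hf : ∀ i, 0 < f i)
    (hload : ∀ q : Fin p,
      (∑ i ∈ Finset.univ.filter (fun i => a i = q), w i / f i) ≤ D) :
    S ^ 3 / ((p : ℝ) * D) ^ 2 ≤ ∑ i, w i * (f i) ^ 2 := by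
  have hp' : (0 : ℝ) < p := by exact_mod_cast hp
  have hS0 : 0 ≤ S := by
    rw [hS]
    exact Finset.sum_nonneg fun i _ => (hw i).le
  have hT : ∑ i, w i / f i ≤ p * D := by
    rw [← Finset.sum_fiberwise Finset.univ a (fun i => w i / f i)]
    calc _ ≤ ∑ _q : Fin p, D := Finset.sum_le_sum fun q _ => hload q
      _ = p * D := by simp
  have hpD : 0 < (p : ℝ) * D := mul_pos hp' hD
  generalize (p : ℝ) * D = P at *
  obtain ⟨c, hc⟩ : ∃ c, c = S / P := ⟨_, rfl⟩
  have hc0 : 0 ≤ c := by rw [hc]; positivity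
  have hcP : c * P = S := by rw [hc]; field_simp
  have key : ∀ i, 3 * c ^ 2 * w i - 2 * c ^ 3 * (w i / f i) ≤ w i * f i ^ 2 := by
    intro i
    have h1 := hf i
    have h2 := hw i
    have : w i * f i ^ 2 - (3 * c ^ 2 * w i - 2 * c ^ 3 * (w i / f i))
        = w i * ((f i - c) ^ 2 * (f i + 2 * c)) / f i := by
      field_simp
      ring
    have h3 : 0 ≤ w i * ((f i - c) ^ 2 * (f i + 2 * c)) / f i := by positivity
    linarith
  have hsum := Finset.sum_le_sum fun i (_ : i ∈ Finset.univ) => key i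
  rw [Finset.sum_sub_distrib, ← Finset.mul_sum, ← Finset.mul_sum, ← hS] at hsum
  have h4 : 2 * c ^ 3 * ∑ i, w i / f i ≤ 2 * c ^ 3 * P :=
    mul_le_mul_of_nonneg_left hT (by positivity)
  have h5 : 2 * c ^ 3 * P = 2 * c ^ 2 * S := by rw [← hcP]; ring
  have h6 : S ^ 3 / P ^ 2 = c ^ 2 * S := by rw [hc]; field_simp
  rw [h6]
  linarith
end

section
/- Let $w_1, w_2 > 0$ and $T > 0$. Define $g_2 = (2^{1/3} w_1 + w_2)/T$ and $g_1 = 2^{-1/3} g_2$. Then $w_1/g_1 + w_2/g_2 = T$, and for all $f_1, f_2 > 0$ with $w_1/f_1 + w_2/f_2 = T$, one has $2 w_1 f_1^2 + w_2 f_2^2 \geq 2 w_1 g_1^2 + w_2 g_2^2$. That is, the minimum of $2 w_1 f_1^2 + w_2 f_2^2$ subject to the time constraint $w_1/f_1 + w_2/f_2 = T$ is attained when $f_1 = 2^{-1/3} f_2$. -/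
lemma tangent_aux (f g : ℝ) (hf : 0 < f) (hg : 0 < g) :
    3 * g ^ 2 - 2 * g ^ 3 * (1 / f) ≤ f ^ 2 := by
  have h : f ^ 2 - (3 * g ^ 2 - 2 * g ^ 3 * (1 / f)) = (f - g) ^ 2 * (f + 2 * g) / f := by
    field_simp
    ring
  have h2 : 0 ≤ (f - g) ^ 2 * (f + 2 * g) / f := by positivity
  linarith

/-- The minimum of `2 w1 f1^2 + w2 f2^2` subject to `w1/f1 + w2/f2 = T`
is attained when `f1 = 2^(-1/3) f2`. -/
theorem min_energy_speed_ratio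
    (w1 w2 T : ℝ) (hw1 : 0 < w1) (hw2 : 0 < w2) (hT : 0 < T)
    (g1 g2 : ℝ)
    (hg2 : g2 = ((2 : ℝ) ^ ((1 : ℝ) / 3) * w1 + w2) / T)
    (hg1 : g1 = (2 : ℝ) ^ (-(1 : ℝ) / 3) * g2) :
    w1 / g1 + w2 / g2 = T ∧
    ∀ f1 f2 : ℝ, 0 < f1 → 0 < f2 → w1 / f1 + w2 / f2 = T →
      2 * w1 * g1 ^ 2 + w2 * g2 ^ 2 ≤ 2 * w1 * f1 ^ 2 + w2 * f2 ^ 2 := by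
  have ha : 0 < (2 : ℝ) ^ ((1 : ℝ) / 3) := by positivity
  have ha3 : ((2 : ℝ) ^ ((1 : ℝ) / 3)) ^ 3 = 2 := by
    rw [← Real.rpow_natCast, ← Real.rpow_mul (by norm_num)]
    norm_num
  have hb : (2 : ℝ) ^ (-(1 : ℝ) / 3) = ((2 : ℝ) ^ ((1 : ℝ) / 3))⁻¹ := by
    rw [← Real.rpow_neg (by norm_num)]
    norm_num
  rw [hb] at hg1
  generalize (2 : ℝ) ^ ((1 : ℝ) / 3) = a at *
  have hg2p : 0 < g2 := by rw [hg2]; positivity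
  have hg1p : 0 < g1 := by rw [hg1]; positivity
  have h21 : g2 = a * g1 := by rw [hg1]; field_simp
  have hsum : a * w1 + w2 = g2 * T := by rw [hg2]; field_simp
  have hc : w1 / g1 + w2 / g2 = T := by
    have : w1 / g1 = a * w1 / g2 := by rw [h21]; field_simp
    rw [this, ← add_div, hsum]
    field_simp
  refine ⟨hc, fun f1 f2 h1 h2 hf => ?_⟩
  have hcube : g2 ^ 3 = 2 * g1 ^ 3 := by rw [h21, mul_pow, ha3]
  have t1 := mul_le_mul_of_nonneg_left (tangent_aux f1 g1 h1 hg1p) (by positivity : 0 ≤ 2 * w1)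
  have t2 := mul_le_mul_of_nonneg_left (tangent_aux f2 g2 h2 hg2p) hw2.le
  have e : 2 * w1 * g1 ^ 2 + w2 * g2 ^ 2 = g2 ^ 3 * (w1 / g1 + w2 / g2) := by
    have p1 : g2 ^ 3 * (w1 / g1) = 2 * w1 * g1 ^ 2 := by
      rw [hcube]
      field_simp
    have p2 : g2 ^ 3 * (w2 / g2) = w2 * g2 ^ 2 := by
      field_simp
    rw [mul_add, p1, p2]
  have e2 : 2 * w1 * (3 * g1 ^ 2 - 2 * g1 ^ 3 * (1 / f1))
      + w2 * (3 * g2 ^ 2 - 2 * g2 ^ 3 * (1 / f2))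
      = 3 * (2 * w1 * g1 ^ 2 + w2 * g2 ^ 2) - 2 * g2 ^ 3 * (w1 / f1 + w2 / f2) := by
    linear_combination 2 * (w1 / f1) * hcube
  rw [hc] at e
  rw [hf] at e2
  linarith
end

section
/- Let $c = 4 \sqrt{2/7} \cdot \cos\!\left( \tfrac{1}{3} \left( \pi - \arctan(1/\sqrt{7}) \right) \right) - 1$. Then $c$ is the unique positive real root of the polynomial $7X^3 + 21X^2 - 3X - 1 = 0$, and $0.283 < c < 0.284$. Consequently, for every $a > 0$, $X = c \cdot a$ is the unique positive real root of $7X^3 + 21 a X^2 - 3 a^2 X - a^3 = 0$. -/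
theorem cubic_unique (c x : ℝ) (h0 : 0 < c) (hr : 7 * c ^ 3 + 21 * c ^ 2 - 3 * c - 1 = 0)
    (hx : 0 < x) (hxr : 7 * x ^ 3 + 21 * x ^ 2 - 3 * x - 1 = 0) : x = c := by
  have h1 : 0 < 7 * x ^ 2 + 21 * x - 3 := by
    by_contra h
    push Not at h
    nlinarith
  have h2 : (x - c) * ((7 * x ^ 2 + 21 * x - 3) + 7 * x * c + 7 * c ^ 2 + 21 * c) = 0 := by
    linear_combination hxr - hr
  have h3 : 0 < (7 * x ^ 2 + 21 * x - 3) + 7 * x * c + 7 * c ^ 2 + 21 * c := by positivity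
  rcases mul_eq_zero.1 h2 with h | h
  · linarith
  · linarith

/-- `c = 4 √(2/7) cos((π - arctan(1/√7))/3) - 1` is the unique positive root
of `7X³ + 21X² - 3X - 1`, lies in `(0.283, 0.284)`, and for every `a > 0`,
`X = c a` is the unique positive root of `7X³ + 21aX² - 3a²X - a³`. -/
theorem constant_c_root
    (c : ℝ)
    (hc : c = 4 * Real.sqrt (2 / 7) *
        Real.cos ((Real.pi - Real.arctan (1 / Real.sqrt 7)) / 3) - 1) :
    (0 < c ∧ 7 * c ^ 3 + 21 * c ^ 2 - 3 * c - 1 = 0 ∧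
      ∀ x : ℝ, 0 < x → 7 * x ^ 3 + 21 * x ^ 2 - 3 * x - 1 = 0 → x = c) ∧
    (0.283 < c ∧ c < 0.284) ∧
    (∀ a : ℝ, 0 < a →
      0 < c * a ∧
      7 * (c * a) ^ 3 + 21 * a * (c * a) ^ 2 - 3 * a ^ 2 * (c * a) - a ^ 3 = 0 ∧
      ∀ x : ℝ, 0 < x → 7 * x ^ 3 + 21 * a * x ^ 2 - 3 * a ^ 2 * x - a ^ 3 = 0 →
        x = c * a) := by
  have ht0 : 0 < Real.arctan (1 / Real.sqrt 7) := Real.arctan_pos.2 (by positivity)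
  have ht1 := Real.arctan_lt_pi_div_two (1 / Real.sqrt 7)
  have hcos : Real.cos (Real.arctan (1 / Real.sqrt 7)) = Real.sqrt (7 / 8) := by
    rw [Real.cos_arctan, div_pow, Real.sq_sqrt (by norm_num), ← Real.sqrt_one,
      ← Real.sqrt_div (by norm_num)]
    norm_num
  have hprod : Real.sqrt (2 / 7) * Real.sqrt (7 / 8) = 1 / 2 := by
    rw [← Real.sqrt_mul (by norm_num), Real.sqrt_eq_iff_mul_self_eq (by norm_num) (by norm_num)]
    norm_num
  have hs2 : Real.sqrt (2 / 7) ^ 2 = 2 / 7 := Real.sq_sqrt (by norm_num)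
  have hs : 1 / 2 < Real.sqrt (2 / 7) := Real.lt_sqrt_of_sq_lt (by norm_num)
  have h3 := Real.cos_three_mul ((Real.pi - Real.arctan (1 / Real.sqrt 7)) / 3)
  rw [mul_div_cancel₀ _ (by norm_num : (3 : ℝ) ≠ 0), Real.cos_pi_sub, hcos] at h3
  have hgt : 1 / 2 < Real.cos ((Real.pi - Real.arctan (1 / Real.sqrt 7)) / 3) := by
    rw [← Real.cos_pi_div_three]
    apply Real.cos_lt_cos_of_nonneg_of_le_pi_div_two <;> linarith [Real.pi_pos]
  generalize Real.cos ((Real.pi - Real.arctan (1 / Real.sqrt 7)) / 3) = u at *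
  generalize Real.sqrt (2 / 7) = s at *
  generalize Real.sqrt (7 / 8) = r at *
  have h0 : 0 < c := by rw [hc]; nlinarith
  have hr : 7 * c ^ 3 + 21 * c ^ 2 - 3 * c - 1 = 0 := by
    rw [hc]
    linear_combination (448 * s * u ^ 3) * hs2 - 32 * s * h3 - 32 * hprod
  refine ⟨⟨h0, hr, fun x hx hxr => cubic_unique c x h0 hr hx hxr⟩, ⟨?_, ?_⟩, ?_⟩
  · by_contra h
    push Not at h
    norm_num at h
    nlinarith [mul_nonneg h0.le (sub_nonneg.2 h), mul_nonneg (sq_nonneg c) (sub_nonneg.2 h)]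
  · by_contra h
    push Not at h
    norm_num at h
    nlinarith [mul_nonneg h0.le (sub_nonneg.2 h), mul_nonneg (sq_nonneg c) (sub_nonneg.2 h)]
  · intro a ha
    refine ⟨by positivity, by linear_combination a ^ 3 * hr, fun x hx hxr => ?_⟩
    have := cubic_unique c (x / a) h0 hr (by positivity) (by
      field_simp
      linear_combination hxr)
    rw [← this]
    field_simp
end

section
/- Let $f_{rel} > 0$, $S > 0$, $D > 0$ with $D f_{rel} > S$, and define $E_1(X) = (S - X) f_{rel}^2 + 2X \left( \frac{2X}{D f_{rel} - S + X} f_{rel} \right)^2$ for $X \geq 0$. Let $c$ be the unique positive root of $7t^3 + 21t^2 - 3t - 1 = 0$. Then $E_1$ attains its global minimum over $[0, \infty)$ at $X^* = c \,(D f_{rel} - S)$, and at this minimizer the re-execution speed equals $\frac{2X^*}{D f_{rel} - S + X^*} f_{rel} = \frac{2c}{1+c} f_{rel}$. -/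
/-- On one processor, the energy `E1(X)` of a chain with re-executed weight `X`
attains its global minimum over `[0,∞)` at `X* = c (D f_rel - S)`, where `c` is
the unique positive root of `7t³+21t²-3t-1`, and there the re-execution speed
equals `2c/(1+c) f_rel`. -/
theorem E1_global_min
    (frel S D c : ℝ) (hfrel : 0 < frel) (hS : 0 < S) (hD : 0 < D)
    (hDS : S < D * frel)
    (hc : 0 < c) (hcroot : 7 * c ^ 3 + 21 * c ^ 2 - 3 * c - 1 = 0)
    (hcuniq : ∀ t : ℝ, 0 < t → 7 * t ^ 3 + 21 * t ^ 2 - 3 * t - 1 = 0 → t = c)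
    (E1 : ℝ → ℝ)
    (hE1 : ∀ X, E1 X =
      (S - X) * frel ^ 2 + 2 * X * (2 * X / (D * frel - S + X) * frel) ^ 2) :
    (∀ X : ℝ, 0 ≤ X → E1 (c * (D * frel - S)) ≤ E1 X) ∧
    2 * (c * (D * frel - S)) / (D * frel - S + c * (D * frel - S)) * frel =
      2 * c / (1 + c) * frel := by
  have ha : 0 < D * frel - S := by linarith
  generalize D * frel - S = a at *
  have key : ∀ t : ℝ, 0 ≤ t → 2 * (t * a) / (a + t * a) = 2 * t / (1 + t) := by
    intro t ht
    have h1 : 0 < 1 + t := by linarith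
    have h2 : a + t * a = (1 + t) * a := by ring
    rw [h2]
    field_simp
  refine ⟨?_, by rw [key c hc.le]⟩
  intro X hX
  obtain ⟨t, ht, rfl⟩ : ∃ t : ℝ, 0 ≤ t ∧ X = t * a :=
    ⟨X / a, by positivity, by field_simp⟩
  rw [hE1, hE1, key c hc.le, key t ht]
  have hu : 0 < 1 + t := by linarith
  have hv : 0 < 1 + c := by linarith
  have hid : ((S - t * a) * frel ^ 2 + 2 * (t * a) * (2 * t / (1 + t) * frel) ^ 2)
      - ((S - c * a) * frel ^ 2 + 2 * (c * a) * (2 * c / (1 + c) * frel) ^ 2)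
      = a * frel ^ 2 * ((t - c) ^ 2 * (24 * t * c + 8 * t + 16 * c)
          / ((1 + t) ^ 2 * (1 + c) ^ 3)
        + (7 * c ^ 3 + 21 * c ^ 2 - 3 * c - 1) * (t - c) / (1 + c) ^ 3) := by
    field_simp
    ring
  rw [hcroot] at hid
  have hnn : 0 ≤ a * frel ^ 2 * ((t - c) ^ 2 * (24 * t * c + 8 * t + 16 * c)
          / ((1 + t) ^ 2 * (1 + c) ^ 3)
        + 0 * (t - c) / (1 + c) ^ 3) := by
    rw [zero_mul, zero_div, add_zero]
    positivity
  linarith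
end

section
/- Let $f_{rel} > 0$, $S > 0$, $D > 0$ with $D f_{rel} > S$, and define $E_2(X) = (S - X) f_{rel}^2 + 2X \left( \frac{X}{D f_{rel} - S + X} f_{rel} \right)^2$ for $X \geq 0$. Then $E_2$ attains its global minimum over $[0, \infty)$ at $X^* = D f_{rel} - S$, and at this minimizer the replication speed equals $\frac{X^*}{D f_{rel} - S + X^*} f_{rel} = \frac{1}{2} f_{rel}$. -/
/-- On at least two processors, the energy `E2(X)` of a chain with replicated
weight `X` attains its global minimum over `[0,∞)` at `X* = D f_rel - S`, and
there the replication speed equals `f_rel / 2`. -/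
theorem E2_global_min
    (frel S D : ℝ) (hfrel : 0 < frel) (hS : 0 < S) (hD : 0 < D)
    (hDS : S < D * frel)
    (E2 : ℝ → ℝ)
    (hE2 : ∀ X, E2 X =
      (S - X) * frel ^ 2 + 2 * X * (X / (D * frel - S + X) * frel) ^ 2) :
    (∀ X : ℝ, 0 ≤ X → E2 (D * frel - S) ≤ E2 X) ∧
    (D * frel - S) / (D * frel - S + (D * frel - S)) * frel = 1 / 2 * frel := by
  obtain ⟨c, hc⟩ : ∃ c, c = D * frel - S := ⟨_, rfl⟩
  have hc0 : 0 < c := by linarith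
  rw [← hc]
  have h2 : c / (c + c) = 1 / 2 := by
    field_simp
    norm_num
  refine ⟨fun X hX => ?_, by rw [h2]⟩
  have hcX : 0 < c + X := by linarith
  rw [hE2, hE2, ← hc, h2]
  have key : ((S - X) * frel ^ 2 + 2 * X * (X / (c + X) * frel) ^ 2)
      - ((S - c) * frel ^ 2 + 2 * c * (1 / 2 * frel) ^ 2)
      = frel ^ 2 * (X - c) ^ 2 * (X + c / 2) / (c + X) ^ 2 := by
    field_simp
    ring
  have : 0 ≤ frel ^ 2 * (X - c) ^ 2 * (X + c / 2) / (c + X) ^ 2 := by positivity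
  linarith
end

section
/- Let $f_{rel} > 0$, $S > 0$, $D > 0$ with $D f_{rel} > S$, and define $E_2(X) = (S - X) f_{rel}^2 + 2X \left( \frac{X}{D f_{rel} - S + X} f_{rel} \right)^2$ for $X \geq 0$. Then $E_2$ is monotonically non-increasing on the interval $[0, \; D f_{rel} - S]$ and monotonically non-decreasing on the interval $[D f_{rel} - S, \; \infty)$. Consequently, over any set of attainable values of $X$, $E_2$ is minimized either at the largest attainable value not exceeding $D f_{rel} - S$ or at the smallest attainable value exceeding $D f_{rel} - S$. -/
lemma E2_diff (f S c a b : ℝ) (ha : 0 < c + a) (hb : 0 < c + b) :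
    ((S - b) * f ^ 2 + 2 * b * (b / (c + b) * f) ^ 2)
      - ((S - a) * f ^ 2 + 2 * a * (a / (c + a) * f) ^ 2)
    = f ^ 2 * (b - a) / ((c + a) ^ 2 * (c + b) ^ 2) *
      (c ^ 2 * (b - a) ^ 2 + (a * b - c ^ 2) * (a * b + c ^ 2 + 2 * c * (a + b))) := by
  have h1 := ha.ne'
  have h2 := hb.ne'
  field_simp
  ring

/-- `E2` is non-increasing on `[0, D f_rel - S]` and non-decreasing on
`[D f_rel - S, ∞)`. -/
theorem E2_unimodal
    (frel S D : ℝ) (hfrel : 0 < frel) (hS : 0 < S) (hD : 0 < D)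
    (hDS : S < D * frel)
    (E2 : ℝ → ℝ)
    (hE2 : ∀ X, E2 X =
      (S - X) * frel ^ 2 + 2 * X * (X / (D * frel - S + X) * frel) ^ 2) :
    (∀ X1 X2 : ℝ, 0 ≤ X1 → X1 ≤ X2 → X2 ≤ D * frel - S → E2 X2 ≤ E2 X1) ∧
    (∀ X1 X2 : ℝ, D * frel - S ≤ X1 → X1 ≤ X2 → E2 X1 ≤ E2 X2) := by
  have hc : 0 < D * frel - S := by linarith
  generalize D * frel - S = c at *
  constructor
  · intro a b ha hab hbc
    have hb : 0 ≤ b := ha.trans hab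
    have hd := E2_diff frel S c a b (by linarith) (by linarith)
    rw [← hE2, ← hE2] at hd
    have hK : 0 ≤ frel ^ 2 * (b - a) / ((c + a) ^ 2 * (c + b) ^ 2) := by
      have : 0 ≤ b - a := by linarith
      positivity
    have h1 : (b - a) ^ 2 ≤ c ^ 2 - a * b := by
      nlinarith [mul_nonneg ha (sub_nonneg.2 hab), mul_self_le_mul_self hb hbc]
    have h2 : c ^ 2 ≤ a * b + c ^ 2 + 2 * c * (a + b) := by
      have : 0 ≤ a * b + 2 * c * (a + b) := by positivity
      linarith
    have h3 := mul_le_mul h1 h2 (by positivity) ((sq_nonneg _).trans h1)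
    have := mul_nonpos_of_nonneg_of_nonpos hK (show c ^ 2 * (b - a) ^ 2 + (a * b - c ^ 2) * (a * b + c ^ 2 + 2 * c * (a + b)) ≤ 0 by linarith)
    linarith
  · intro a b hca hab
    have ha : 0 < a := by linarith
    have hb : 0 < b := by linarith
    have hd := E2_diff frel S c a b (by linarith) (by linarith)
    rw [← hE2, ← hE2] at hd
    have h0 : 0 ≤ b - a := by linarith
    have h1 : 0 ≤ a * b - c ^ 2 := by nlinarith
    have : 0 ≤ E2 b - E2 a := by
      rw [hd]; positivity
    linarith
end

section
/- Let $f_{rel} > 0$, $S > 0$, $D > 0$ with $D f_{rel} > S$, let $c$ be the unique positive root of $7t^3 + 21t^2 - 3t - 1 = 0$, and define $E_1(X) = (S - X) f_{rel}^2 + 2X \left( \frac{2X}{D f_{rel} - S + X} f_{rel} \right)^2$ for $X \geq 0$. Then $E_1$ is monotonically non-increasing on the interval $[0, \; c(D f_{rel} - S)]$ and monotonically non-decreasing on the interval $[c(D f_{rel} - S), \; \infty)$. -/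
/-- `E1` is non-increasing on `[0, c(D f_rel - S)]` and non-decreasing on
`[c(D f_rel - S), ∞)`, where `c` is the unique positive root of
`7t³+21t²-3t-1`. -/
theorem E1_unimodal
    (frel S D c : ℝ) (hfrel : 0 < frel) (hS : 0 < S) (hD : 0 < D)
    (hDS : S < D * frel)
    (hc : 0 < c) (hcroot : 7 * c ^ 3 + 21 * c ^ 2 - 3 * c - 1 = 0)
    (hcuniq : ∀ t : ℝ, 0 < t → 7 * t ^ 3 + 21 * t ^ 2 - 3 * t - 1 = 0 → t = c)
    (E1 : ℝ → ℝ)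
    (hE1 : ∀ X, E1 X =
      (S - X) * frel ^ 2 + 2 * X * (2 * X / (D * frel - S + X) * frel) ^ 2) :
    (∀ X1 X2 : ℝ, 0 ≤ X1 → X1 ≤ X2 → X2 ≤ c * (D * frel - S) → E1 X2 ≤ E1 X1) ∧
    (∀ X1 X2 : ℝ, c * (D * frel - S) ≤ X1 → X1 ≤ X2 → E1 X1 ≤ E1 X2) := by
  obtain ⟨d, hd⟩ : ∃ d, d = D * frel - S := ⟨_, rfl⟩
  simp only [← hd] at hE1 ⊢
  have hd0 : 0 < d := by linarith
  have key : ∀ X1 X2 : ℝ, 0 ≤ X1 → 0 ≤ X2 → E1 X2 - E1 X1 = frel ^ 2 * (X2 - X1) *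
      (7 - 24 * (d / (d + X1)) * (d / (d + X2)) + 8 * (d / (d + X1)) * (d / (d + X2))
        * (d / (d + X1) + d / (d + X2))) := by
    intro X1 X2 h1 h2
    have a1 : d + X1 ≠ 0 := by positivity
    have a2 : d + X2 ≠ 0 := by positivity
    rw [hE1, hE1]
    field_simp
    ring
  -- monotonicity of the symmetric form
  have mono1 : ∀ p p' r : ℝ, 0 ≤ r → r ≤ 1 → p ≤ p' → p' ≤ 1 →
      7 - 24 * p' * r + 8 * p' * r * (p' + r) ≤ 7 - 24 * p * r + 8 * p * r * (p + r) := by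
    intro p p' r h0 h1 hp hp1
    have : 0 ≤ r * ((p' - p) * (3 - p - p' - r)) :=
      mul_nonneg h0 (mul_nonneg (by linarith) (by linarith))
    nlinarith
  have mono2 : ∀ p p' r r' : ℝ, 0 ≤ p → p ≤ p' → p' ≤ 1 → 0 ≤ r → r ≤ r' → r' ≤ 1 →
      7 - 24 * p' * r' + 8 * p' * r' * (p' + r') ≤ 7 - 24 * p * r + 8 * p * r * (p + r) := by
    intro p p' r r' h0 h1 h2 h3 h4 h5
    have e1 := mono1 p p' r' (by linarith) h5 h1 h2
    have e2 := mono1 r r' p h0 (by linarith) h4 h5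
    linarith
  have hw : 7 - 24 * (d / (d + c * d)) * (d / (d + c * d)) + 8 * (d / (d + c * d)) *
      (d / (d + c * d)) * (d / (d + c * d) + d / (d + c * d)) = 0 := by
    have e : d / (d + c * d) = 1 / (1 + c) := by
      have : d + c * d ≠ 0 := by positivity
      field_simp
    rw [e]
    have : 1 + c ≠ 0 := by positivity
    field_simp
    linarith
  have anti : ∀ X Y : ℝ, 0 ≤ X → X ≤ Y → d / (d + Y) ≤ d / (d + X) := by
    intro X Y h0 h
    exact div_le_div_of_nonneg_left hd0.le (by linarith) (by linarith)
  have le1 : ∀ X : ℝ, 0 ≤ X → d / (d + X) ≤ 1 := by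
    intro X h
    rw [div_le_one (by linarith)]
    linarith
  have nn : ∀ X : ℝ, 0 ≤ X → 0 ≤ d / (d + X) := by
    intro X h
    positivity
  have hcd : 0 ≤ c * d := by positivity
  constructor
  · intro X1 X2 h0 h12 h2
    have k := key X1 X2 h0 (h0.trans h12)
    have m := mono2 _ _ _ _ (nn _ hcd) (anti X1 (c * d) h0 (h12.trans h2)) (le1 _ h0)
      (nn _ hcd) (anti X2 (c * d) (h0.trans h12) h2) (le1 _ (h0.trans h12))
    rw [hw] at m
    have := mul_nonpos_of_nonneg_of_nonpos
      (mul_nonneg (sq_nonneg frel) (sub_nonneg.2 h12)) m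
    linarith
  · intro X1 X2 h1 h12
    have h0 := hcd.trans h1
    have k := key X1 X2 h0 (h0.trans h12)
    have m := mono2 _ _ _ _ (nn _ h0) (anti (c * d) X1 hcd h1) (le1 _ hcd)
      (nn _ (h0.trans h12)) (anti (c * d) X2 hcd (h1.trans h12)) (le1 _ hcd)
    rw [hw] at m
    have := mul_nonneg (mul_nonneg (sq_nonneg frel) (sub_nonneg.2 h12)) m
    linarith
end

section
/- Let $f_{rel} > 0$, $S > 0$, $D > 0$ with $D f_{rel} \geq 2S$, and define $E_2(X) = (S - X) f_{rel}^2 + 2X \left( \frac{X}{D f_{rel} - S + X} f_{rel} \right)^2$ for $X \in [0, S]$. Then $E_2$ attains its minimum over $[0, S]$ at $X = S$. That is, when the deadline satisfies $D \geq 2S/f_{rel}$, replicating all tasks is optimal for a linear chain on at least two processors. -/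
/-- When `D f_rel ≥ 2S`, replicating all tasks is optimal: `E2` attains its
minimum over `[0, S]` at `X = S`. -/
theorem E2_min_at_S
    (frel S D : ℝ) (hfrel : 0 < frel) (hS : 0 < S) (hD : 0 < D)
    (hDS : 2 * S ≤ D * frel)
    (E2 : ℝ → ℝ)
    (hE2 : ∀ X, E2 X =
      (S - X) * frel ^ 2 + 2 * X * (X / (D * frel - S + X) * frel) ^ 2) :
    ∀ X : ℝ, 0 ≤ X → X ≤ S → E2 S ≤ E2 X := by
  intro X hX hXS
  rw [hE2, hE2]
  obtain ⟨c, hc⟩ : ∃ c, c = D * frel - S := ⟨_, rfl⟩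
  rw [← hc]
  have hcS : S ≤ c := by linarith
  have hc0 : 0 < c := by linarith
  have h1 : 0 < c + S := by linarith
  have h2 : 0 < c + X := by linarith
  have a1 : 0 ≤ c ^ 2 - S ^ 2 := by nlinarith
  have a2 : 0 ≤ c ^ 2 - X ^ 2 := by nlinarith
  have a3 : 0 ≤ c ^ 2 - S * X := by nlinarith
  have key : 0 ≤ (c^2 - S^2) * (c^2 - X^2) + 2 * (S * X) * (c^2 - S * X)
      + 2 * (c * (X + S)) * (c^2 - S * X) := by positivity
  have e : (S - X) * frel ^ 2 + 2 * X * (X / (c + X) * frel) ^ 2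
      - ((S - S) * frel ^ 2 + 2 * S * (S / (c + S) * frel) ^ 2)
      = frel ^ 2 * (S - X) * ((c^2 - S^2) * (c^2 - X^2) + 2 * (S * X) * (c^2 - S * X)
      + 2 * (c * (X + S)) * (c^2 - S * X)) / ((c + X) ^ 2 * (c + S) ^ 2) := by
    field_simp
    ring
  have hd : 0 ≤ S - X := by linarith
  have : 0 ≤ frel ^ 2 * (S - X) * ((c^2 - S^2) * (c^2 - X^2) + 2 * (S * X) * (c^2 - S * X)
      + 2 * (c * (X + S)) * (c^2 - S * X)) / ((c + X) ^ 2 * (c + S) ^ 2) :=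
    div_nonneg (mul_nonneg (mul_nonneg (sq_nonneg _) hd) key) (by positivity)
  linarith
end

section
/- Let $f_{rel} > 0$, $S > 0$, let $c$ be the unique positive root of $7t^3 + 21t^2 - 3t - 1 = 0$, let $D > 0$ with $D f_{rel} \geq \frac{1+c}{c} S$, and define $E_1(X) = (S - X) f_{rel}^2 + 2X \left( \frac{2X}{D f_{rel} - S + X} f_{rel} \right)^2$ for $X \in [0, S]$. Then $E_1$ attains its minimum over $[0, S]$ at $X = S$. That is, when the deadline satisfies $D \geq \frac{1+c}{c} \cdot \frac{S}{f_{rel}}$, re-executing all tasks is optimal for a linear chain on one processor. -/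
/-- When `D f_rel ≥ (1+c)/c · S`, re-executing all tasks is optimal: `E1`
attains its minimum over `[0, S]` at `X = S`. -/
theorem E1_min_at_S
    (frel S D c : ℝ) (hfrel : 0 < frel) (hS : 0 < S) (hD : 0 < D)
    (hc : 0 < c) (hcroot : 7 * c ^ 3 + 21 * c ^ 2 - 3 * c - 1 = 0)
    (hcuniq : ∀ t : ℝ, 0 < t → 7 * t ^ 3 + 21 * t ^ 2 - 3 * t - 1 = 0 → t = c)
    (hDS : (1 + c) / c * S ≤ D * frel)
    (E1 : ℝ → ℝ)
    (hE1 : ∀ X, E1 X =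
      (S - X) * frel ^ 2 + 2 * X * (2 * X / (D * frel - S + X) * frel) ^ 2) :
    ∀ X : ℝ, 0 ≤ X → X ≤ S → E1 S ≤ E1 X := by
  intro X hX0 hXS
  obtain ⟨a, ha⟩ : ∃ a, a = D * frel - S := ⟨_, rfl⟩
  have hSa : S ≤ c * a := by
    have h1 : c * ((1 + c) / c * S) ≤ c * (D * frel) := mul_le_mul_of_nonneg_left hDS hc.le
    have h2 : c * ((1 + c) / c * S) = (1 + c) * S := by field_simp
    rw [h2] at h1
    rw [ha]; nlinarith
  have ha0 : 0 < a := by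
    by_contra h
    push Not at h
    nlinarith
  rw [hE1, hE1, ← ha]
  obtain ⟨u, hu⟩ : ∃ u, u = X / (a + X) := ⟨_, rfl⟩
  obtain ⟨v, hv⟩ : ∃ v, v = S / (a + S) := ⟨_, rfl⟩
  obtain ⟨w, hw⟩ : ∃ w, w = c / (1 + c) := ⟨_, rfl⟩
  have hu0 : 0 ≤ u := by rw [hu]; positivity
  have huv : u ≤ v := by
    rw [hu, hv, div_le_div_iff₀ (by positivity) (by positivity)]; nlinarith
  have hvw : v ≤ w := by
    rw [hv, hw, div_le_div_iff₀ (by positivity) (by positivity)]; nlinarith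
  have hw1 : w < 1 := by
    rw [hw, div_lt_one (by positivity)]; linarith
  have hweq : 8 * (3 * w ^ 2 - 2 * w ^ 3) = 1 := by
    rw [hw]; field_simp; linarith
  have hv0 : 0 ≤ v := hu0.trans huv
  have k1 : v ^ 2 + u * v + u ^ 2 - u * v ^ 2 - u ^ 2 * v ≤ 3 * v ^ 2 - 2 * v ^ 3 := by
    have : 0 ≤ (v - u) * ((u + v) * (1 - v) + v * (1 - v) + u * 0 ) := by
      apply mul_nonneg (by linarith)
      have : 0 ≤ 1 - v := by linarith
      positivity
    nlinarith
  have k2 : 3 * v ^ 2 - 2 * v ^ 3 ≤ 3 * w ^ 2 - 2 * w ^ 3 := by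
    have h1 : 0 ≤ 1 - w := by linarith
    have h2 : 0 ≤ 1 - v := by linarith
    have h3 : 0 ≤ w - v := by linarith
    have h4 : 0 ≤ w := by linarith
    have : 0 ≤ (w - v) * (2 * w * (1 - w) + 2 * v * (1 - v) + w * (1 - v) + v * (1 - w)) := by positivity
    nlinarith
  have hX : X = a * u / (1 - u) := by
    have : 1 - u ≠ 0 := by linarith
    rw [eq_div_iff this, hu]; field_simp; ring
  have hS' : S = a * v / (1 - v) := by
    have : 1 - v ≠ 0 := by linarith
    rw [eq_div_iff this, hv]; field_simp; ring
  have hu1 : 0 < 1 - u := by linarith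
  have hv1 : 0 < 1 - v := by linarith
  have key : 0 ≤ (S - X) - (8 * S * v ^ 2 - 8 * X * u ^ 2) := by
    have : (S - X) - (8 * S * v ^ 2 - 8 * X * u ^ 2) =
        a * (v - u) * (1 - 8 * (v ^ 2 + u * v + u ^ 2 - u * v ^ 2 - u ^ 2 * v)) / ((1 - u) * (1 - v)) := by
      rw [hX, hS']; field_simp; ring
    rw [this]
    apply div_nonneg _ (by positivity)
    apply mul_nonneg (mul_nonneg ha0.le (by linarith)) (by linarith)
  have e1 : 2 * X / (a + X) = 2 * u := by rw [hu]; ring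
  have e2 : 2 * S / (a + S) = 2 * v := by rw [hv]; ring
  rw [e1, e2]
  have := mul_nonneg key (sq_nonneg frel)
  nlinarith
end

section
/- Let $f_{rel} > 0$, $S > 0$, $D > 0$ with $D f_{rel} > S$, and define $E_2(X) = (S - X) f_{rel}^2 + \frac{2X^3}{(D f_{rel} - S + X)^2} f_{rel}^2$ for $X \geq 0$. Let $\varepsilon' > 0$ and let $X_a, X_o$ satisfy $0 \leq X_a \leq X_o \leq S$ and $X_o \leq (1 + \varepsilon') X_a$. Then $E_2(X_a) \leq (1 + \varepsilon')^2 E_2(X_o) + \varepsilon' S f_{rel}^2$. -/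
/-- Key approximation step in the FPTAS analysis:
if `Xa ≤ Xo ≤ (1+ε')Xa` then `E2(Xa) ≤ (1+ε')² E2(Xo) + ε' S f_rel²`. -/
theorem fptas_energy_bound
    (frel S D : ℝ) (hfrel : 0 < frel) (hS : 0 < S) (hD : 0 < D)
    (hDS : S < D * frel)
    (E2 : ℝ → ℝ)
    (hE2 : ∀ X, E2 X =
      (S - X) * frel ^ 2 + 2 * X ^ 3 / (D * frel - S + X) ^ 2 * frel ^ 2)
    (ε' Xa Xo : ℝ) (hε : 0 < ε')
    (h0 : 0 ≤ Xa) (h1 : Xa ≤ Xo) (h2 : Xo ≤ S) (h3 : Xo ≤ (1 + ε') * Xa) :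
    E2 Xa ≤ (1 + ε') ^ 2 * E2 Xo + ε' * S * frel ^ 2 := by
  have hc : 0 < D * frel - S := by linarith
  rw [hE2, hE2]
  generalize D * frel - S = c at hc
  have hXo : 0 ≤ Xo := h0.trans h1
  have hg : 2 * Xa ^ 3 / (c + Xa) ^ 2 ≤ 2 * Xo ^ 3 / (c + Xo) ^ 2 := by
    rw [div_le_div_iff₀ (by positivity) (by positivity)]
    have k1 : Xa * (c + Xo) ≤ Xo * (c + Xa) := by nlinarith
    have k2 : (Xa * (c + Xo)) ^ 2 ≤ (Xo * (c + Xa)) ^ 2 := by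
      have : 0 ≤ Xa * (c + Xo) := by positivity
      gcongr
    have k3 : Xa * (Xa * (c + Xo)) ^ 2 ≤ Xo * (Xo * (c + Xa)) ^ 2 := by gcongr
    linarith [k3]
  have hn : 0 ≤ 2 * Xo ^ 3 / (c + Xo) ^ 2 := by positivity
  generalize 2 * Xa ^ 3 / (c + Xa) ^ 2 = ga at *
  generalize 2 * Xo ^ 3 / (c + Xo) ^ 2 = go at *
  have hf : 0 ≤ frel ^ 2 := by positivity
  have m1 : ε' * Xa ≤ ε' * S := by
    have := h1.trans h2
    gcongr
  have m2 : 0 ≤ ((1 + ε') ^ 2 - 1) * (S - Xo + go) :=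
    mul_nonneg (by nlinarith) (by linarith)
  have m3 : S - Xa + ga ≤ (1 + ε') ^ 2 * (S - Xo + go) + ε' * S := by linarith
  have := mul_le_mul_of_nonneg_right m3 hf
  linarith
end

section
/- Let $f_{rel} > 0$, $S > 0$, $D > 0$ with $D f_{rel} > S$, and define $E_2(X) = (S - X) f_{rel}^2 + \frac{2X^3}{(D f_{rel} - S + X)^2} f_{rel}^2$ for $X \geq 0$. Let $0 < \varepsilon' < 1$ and let $X_a, X_o$ satisfy $0 \leq X_a \leq X_o \leq S$, $X_o \leq (1 + \varepsilon') X_a$, and suppose additionally that $S f_{rel}^2 \leq 25\, E_2(X_o)$. Then $E_2(X_a) \leq (1 + 28 \varepsilon')\, E_2(X_o)$. -/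
/-- Approximation ratio of the FPTAS: if additionally `S f_rel² ≤ 25 E2(Xo)`,
then `E2(Xa) ≤ (1 + 28ε') E2(Xo)`. -/
theorem fptas_approx_ratio
    (frel S D : ℝ) (hfrel : 0 < frel) (hS : 0 < S) (hD : 0 < D)
    (hDS : S < D * frel)
    (E2 : ℝ → ℝ)
    (hE2 : ∀ X, E2 X =
      (S - X) * frel ^ 2 + 2 * X ^ 3 / (D * frel - S + X) ^ 2 * frel ^ 2)
    (ε' Xa Xo : ℝ) (hε0 : 0 < ε') (hε1 : ε' < 1)
    (h0 : 0 ≤ Xa) (h1 : Xa ≤ Xo) (h2 : Xo ≤ S) (h3 : Xo ≤ (1 + ε') * Xa)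
    (hbound : S * frel ^ 2 ≤ 25 * E2 Xo) :
    E2 Xa ≤ (1 + 28 * ε') * E2 Xo := by
  have hc : 0 < D * frel - S := by linarith
  have hf2 : 0 < frel ^ 2 := by positivity
  have hXo : 0 ≤ Xo := h0.trans h1
  have key : 2 * Xa ^ 3 / (D * frel - S + Xa) ^ 2 ≤ 2 * Xo ^ 3 / (D * frel - S + Xo) ^ 2 := by
    generalize D * frel - S = c at hc
    rw [div_le_div_iff₀ (by positivity) (by positivity)]
    have ha : Xa * (c + Xo) ≤ Xo * (c + Xa) := by nlinarith
    have hb : (Xa * (c + Xo)) ^ 2 ≤ (Xo * (c + Xa)) ^ 2 :=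
      pow_le_pow_left₀ (by positivity) ha 2
    have hd : Xa * (Xa * (c + Xo)) ^ 2 ≤ Xo * (Xo * (c + Xa)) ^ 2 :=
      mul_le_mul h1 hb (by positivity) hXo
    nlinarith [hd]
  have hk := mul_le_mul_of_nonneg_right key hf2.le
  have hE : 0 < E2 Xo := by
    have : 0 < S * frel ^ 2 := by positivity
    linarith
  have e1 : (Xo - Xa) * frel ^ 2 ≤ (ε' * S) * frel ^ 2 := by
    apply mul_le_mul_of_nonneg_right _ hf2.le
    nlinarith
  have e2 := mul_le_mul_of_nonneg_left hbound hε0.le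
  have e3 : 0 < ε' * E2 Xo := by positivity
  have ea := hE2 Xa
  have eo := hE2 Xo
  have e4 : E2 Xa ≤ E2 Xo + (Xo - Xa) * frel ^ 2 := by
    rw [ea, eo]; linarith
  linarith
end

section
/- Let $p \geq 1$ be an integer, let $C > 0$, let $w_1, \dots, w_n > 0$ with $S = \sum_{i=1}^n w_i$, and suppose that every weight satisfies $w_i < \max(S/p, \; C)$. Let $\beta = \max\!\left( 2 - \frac{3}{2p+1}, \; 2 - \frac{p+2}{4p+2} \right)$. Then there exists a partition of $\{1, \dots, n\}$ into $p$ (possibly empty) parts $P_1, \dots, P_p$ such that for every $q$, $\sum_{i \in P_q} w_i \leq \beta \cdot \max(S/p, \; C)$. -/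
open Finset

theorem greedy_aux (p : ℕ) (hp : 1 ≤ p) (n : ℕ) (w : Fin n → ℝ) (hw : ∀ i, 0 < w i)
    (M B : ℝ) (hM : ∀ i, w i ≤ M) (hMB : M ≤ B) (h2 : 2 * (p : ℝ) * M ≤ ((p : ℝ) + 1) * B)
    (s : Finset (Fin n)) (hs : ∑ i ∈ s, w i ≤ p * M) (hB : 0 ≤ B) :
    ∃ a : Fin n → Fin p, ∀ q : Fin p, (∑ i ∈ s.filter (fun i => a i = q), w i) ≤ B := by
  classical
  induction s using Finset.induction_on_min_value w with
  | empty => exact ⟨fun _ => ⟨0, hp⟩, fun q => by simpa using hB⟩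
  | insert x s hx hmin ih =>
    rw [Finset.sum_insert hx] at hs
    obtain ⟨a, ha⟩ := ih (by linarith [hw x])
    have key : ∃ q : Fin p, w x + (∑ i ∈ s.filter (fun i => a i = q), w i) ≤ B := by
      by_cases hc : s.card < p
      · have : ∃ q, q ∉ s.image a := by
          by_contra! h
          have h1 : (Finset.univ : Finset (Fin p)) ⊆ s.image a := fun q _ => h q
          have h3 := Finset.card_le_card h1
          have h4 := Finset.card_image_le (s := s) (f := a)
          simp at h3
          omega
        obtain ⟨q, hq⟩ := this
        refine ⟨q, ?_⟩
        have : s.filter (fun i => a i = q) = ∅ := by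
          apply Finset.filter_eq_empty_iff.mpr
          intro i hi h
          exact hq (Finset.mem_image.mpr ⟨i, hi, h⟩)
        rw [this]
        simpa using (hM x).trans hMB
      · push Not at hc
        by_contra! h
        have h1 : (s.card : ℝ) * w x ≤ ∑ i ∈ s, w i := by
          have := Finset.card_nsmul_le_sum s w (w x) hmin
          simpa using this
        have hc' : (p : ℝ) ≤ s.card := by exact_mod_cast hc
        have h3 : (p : ℝ) * w x ≤ ∑ i ∈ s, w i :=
          (mul_le_mul_of_nonneg_right hc' (hw x).le).trans h1
        have h4 : ∑ q : Fin p, (∑ i ∈ s.filter (fun i => a i = q), w i) = ∑ i ∈ s, w i :=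
          Finset.sum_fiberwise s a w
        haveI : Nonempty (Fin p) := ⟨⟨0, hp⟩⟩
        have h5 : ∑ q : Fin p, (B - w x) <
            ∑ q : Fin p, (∑ i ∈ s.filter (fun i => a i = q), w i) :=
          Finset.sum_lt_sum_of_nonempty Finset.univ_nonempty (fun q _ => by linarith [h q])
        rw [h4] at h5
        simp at h5
        have hp' : (1 : ℝ) ≤ p := by exact_mod_cast hp
        have e1 : (p : ℝ) * B < p * M + (p - 1) * w x := by linarith
        have e2 : ((p : ℝ) + 1) * w x ≤ p * M := by linarith
        have e3 : ((p : ℝ) - 1) * (((p : ℝ) + 1) * w x) ≤ (p - 1) * (p * M) :=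
          mul_le_mul_of_nonneg_left e2 (by linarith)
        have e4 := mul_lt_mul_of_pos_left e1 (show (0 : ℝ) < p + 1 by linarith)
        have e5 := mul_le_mul_of_nonneg_left h2 (show (0 : ℝ) ≤ p by linarith)
        nlinarith
    obtain ⟨q, hq⟩ := key
    have heq : ∀ r, s.filter (fun i => Function.update a x q i = r)
        = s.filter (fun i => a i = r) := by
      intro r
      apply Finset.filter_congr
      intro i hi
      rw [Function.update_of_ne (by rintro rfl; exact hx hi)]
    refine ⟨Function.update a x q, fun r => ?_⟩
    rw [Finset.filter_insert, heq]
    by_cases hr : q = r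
    · subst hr
      simpa [hx] using hq
    · simpa [hr] using ha r

/-- Load-balancing lemma: if every weight is below `max(S/p, C)`, the tasks can
be partitioned into `p` parts each of total weight at most
`β · max(S/p, C)` with `β = max(2 - 3/(2p+1), 2 - (p+2)/(4p+2))`. -/
theorem load_balancing
    (p : ℕ) (hp : 1 ≤ p) (C : ℝ) (hC : 0 < C)
    (n : ℕ) (w : Fin n → ℝ) (hw : ∀ i, 0 < w i)
    (S : ℝ) (hS : S = ∑ i, w i)
    (hsmall : ∀ i, w i < max (S / (p : ℝ)) C)
    (β : ℝ)
    (hβ : β = max (2 - 3 / (2 * (p : ℝ) + 1)) (2 - ((p : ℝ) + 2) / (4 * (p : ℝ) + 2))) :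
    ∃ a : Fin n → Fin p, ∀ q : Fin p,
      (∑ i ∈ Finset.univ.filter (fun i => a i = q), w i) ≤
        β * max (S / (p : ℝ)) C := by
  have hp' : (1 : ℝ) ≤ p := by exact_mod_cast hp
  set M := max (S / (p : ℝ)) C with hMdef
  have hM0 : 0 < M := lt_of_lt_of_le hC (le_max_right _ _)
  have hSM : S ≤ p * M := by
    have : S / (p : ℝ) ≤ M := le_max_left _ _
    rw [div_le_iff₀ (by linarith)] at this
    linarith
  have hb : 2 - 3 / (2 * (p : ℝ) + 1) ≤ β := hβ ▸ le_max_left _ _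
  have hb1 : 3 / (2 * (p : ℝ) + 1) ≤ 1 := by
    rw [div_le_one (by linarith)]; linarith
  have hb2 : 2 * (p : ℝ) ≤ (p + 1) * β := by
    have : 3 / (2 * (p : ℝ) + 1) ≤ 2 / (p + 1) := by
      rw [div_le_div_iff₀ (by linarith) (by linarith)]; linarith
    have h3 : 2 - 2 / ((p : ℝ) + 1) ≤ β := by linarith
    have h4 := mul_le_mul_of_nonneg_left h3 (show (0 : ℝ) ≤ p + 1 by linarith)
    have h5 : ((p : ℝ) + 1) * (2 - 2 / ((p : ℝ) + 1)) = 2 * p := by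
      have : (p : ℝ) + 1 ≠ 0 := by linarith
      field_simp; ring
    linarith
  have hMB : M ≤ β * M := le_mul_of_one_le_left hM0.le (by linarith)
  exact greedy_aux p hp n w hw M (β * M) (fun i => (hsmall i).le) hMB
    (by nlinarith) Finset.univ (by rw [← hS]; exact hSM) (by linarith)
end
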